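/- arXiv:2102.07091 — 8 statements merged into one kernel-verified Lean document; each statement's English description precedes it below -/
import Mathlib

section
/- Let r ≤ d, let x be a real d×r matrix with xᵀx = I_r, and let ξ be a real d×r matrix with xᵀξ + ξᵀx = 0. Set Q := (x+ξ)(I_r + ξᵀξ)^{-1/2}. Then for every real d×r matrix U with UᵀU = I_r one has ‖(x+ξ) − Q‖_F ≤ ‖(x+ξ) − U‖_F; that is, the polar factor Q is the orthogonal projection of x+ξ onto the Stiefel manifold St(d,r). -/
open Matrix

/-- Frobenius norm of a real matrix. -/
noncomputable def frobNorm {m n : ℕ} (A : Matrix (Fin m) (Fin n) ℝ) : ℝ :=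
  Real.sqrt (∑ i, ∑ j, (A i j) ^ 2)

theorem frobNorm_eq_trace {m n : ℕ} (A : Matrix (Fin m) (Fin n) ℝ) :
    frobNorm A = Real.sqrt ((Aᵀ * A).trace) := by
  unfold frobNorm
  congr 1
  rw [Finset.sum_comm]
  simp [Matrix.trace, Matrix.mul_apply, pow_two]

/-- **The polar factor is the orthogonal projection onto the Stiefel manifold.**
If `x ∈ St(d,r)`, `ξ` is tangent at `x`, and `S` is the (unique) positive definite
square root of `I + ξᵀξ`, then the polar factor `Q = (x+ξ) S⁻¹` is a closest point of
`St(d,r)` to `x + ξ` in the Frobenius norm. -/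
theorem polar_factor_is_projection
    (d r : ℕ) (hdr : r ≤ d) (x ξ : Matrix (Fin d) (Fin r) ℝ)
    (hx : xᵀ * x = 1) (hξ : xᵀ * ξ + ξᵀ * x = 0) :
    ∀ S : Matrix (Fin r) (Fin r) ℝ, S.PosDef → S * S = 1 + ξᵀ * ξ →
      ∀ U : Matrix (Fin d) (Fin r) ℝ, Uᵀ * U = 1 →
        frobNorm ((x + ξ) - (x + ξ) * S⁻¹) ≤ frobNorm ((x + ξ) - U) := by
  intro S hS hSS U hU
  have hST : Sᵀ = S := by
    have := hS.isHermitian.eq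
    rwa [Matrix.conjTranspose_eq_transpose_of_trivial] at this
  have hdet : IsUnit S.det := (Matrix.isUnit_iff_isUnit_det S).mp hS.isUnit
  have hYY : (x + ξ)ᵀ * (x + ξ) = S * S := by
    rw [hSS, Matrix.transpose_add, Matrix.add_mul, Matrix.mul_add, Matrix.mul_add, hx]
    calc 1 + xᵀ * ξ + (ξᵀ * x + ξᵀ * ξ) = 1 + (xᵀ * ξ + ξᵀ * x) + ξᵀ * ξ := by abel
      _ = _ := by rw [hξ, add_zero]
  generalize x + ξ = Y at hYY ⊢
  obtain ⟨Q, hQ⟩ : ∃ Q, Q = Y * S⁻¹ := ⟨_, rfl⟩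
  have hQS : Y = Q * S := by
    rw [hQ, Matrix.mul_assoc, Matrix.nonsing_inv_mul S hdet, Matrix.mul_one]
  have hQQ : Qᵀ * Q = 1 := by
    rw [hQ, Matrix.transpose_mul, Matrix.transpose_nonsing_inv, hST, Matrix.mul_assoc,
      ← Matrix.mul_assoc Yᵀ, hYY, Matrix.mul_assoc S, Matrix.mul_nonsing_inv S hdet,
      Matrix.mul_one, Matrix.nonsing_inv_mul S hdet]
  rw [← hQ, frobNorm_eq_trace, frobNorm_eq_trace]
  apply Real.sqrt_le_sqrt
  have hpos : 0 ≤ ((Q - U) * S * (Q - U)ᵀ).trace := by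
    have := (hS.posSemidef.mul_mul_conjTranspose_same (Q - U)).trace_nonneg
    rwa [Matrix.conjTranspose_eq_transpose_of_trivial] at this
  have e1 : ((Q - U) * S * (Q - U)ᵀ).trace
      = 2 * S.trace - (S * (Qᵀ * U)).trace - (S * (Uᵀ * Q)).trace := by
    rw [Matrix.mul_assoc, Matrix.trace_mul_comm, Matrix.mul_assoc]
    have : (Q - U)ᵀ * (Q - U) = 1 + 1 - Qᵀ * U - Uᵀ * Q := by
      rw [Matrix.transpose_sub, Matrix.sub_mul, Matrix.mul_sub, Matrix.mul_sub, hQQ, hU]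
      abel
    rw [this]
    simp only [Matrix.mul_sub, Matrix.mul_add, Matrix.trace_sub, Matrix.trace_add, Matrix.mul_one]
    ring
  have e2 : ∀ V : Matrix (Fin d) (Fin r) ℝ, Vᵀ * V = 1 →
      ((Y - V)ᵀ * (Y - V)).trace = (S * S).trace + (1 : Matrix (Fin r) (Fin r) ℝ).trace
        - (S * (Qᵀ * V)).trace - (S * (Vᵀ * Q)).trace := by
    intro V hV
    have h1 : Yᵀ * V = S * (Qᵀ * V) := by
      rw [hQS, Matrix.transpose_mul, hST, Matrix.mul_assoc]
    have h2 : (Vᵀ * Y).trace = (S * (Vᵀ * Q)).trace := by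
      rw [hQS, ← Matrix.mul_assoc, Matrix.trace_mul_comm]
    rw [Matrix.transpose_sub, Matrix.sub_mul, Matrix.mul_sub, Matrix.mul_sub, hYY, hV]
    simp only [Matrix.trace_sub, h1, h2]
    ring
  rw [e2 Q hQQ, e2 U hU, hQQ, Matrix.mul_one]
  linarith
end

section
/- Let r ≤ d, let x be a real d×r matrix with xᵀx = I_r, and let ξ be a real d×r matrix with xᵀξ + ξᵀx = 0 and ‖ξ‖_F ≤ 1. Then the polar retraction satisfies the second-order boundedness property with constant M = 1: ‖(x+ξ)(I_r + ξᵀξ)^{-1/2} − (x+ξ)‖_F ≤ ‖ξ‖_F². -/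
open Matrix

theorem frobNorm_sq_eq {m n : ℕ} (A : Matrix (Fin m) (Fin n) ℝ) :
    frobNorm A ^ 2 = (Aᵀ * A).trace := by
  unfold frobNorm
  have h0 : 0 ≤ ∑ i, ∑ j, (A i j) ^ 2 :=
    Finset.sum_nonneg fun i _ => Finset.sum_nonneg fun j _ => sq_nonneg _
  refine (Real.sq_sqrt h0).trans ?_
  refine Finset.sum_comm.trans ?_
  simp [Matrix.trace, Matrix.mul_apply, sq]

theorem trace_sq_eq_sum {n : ℕ} {S : Matrix (Fin n) (Fin n) ℝ} (hS : S.IsHermitian) :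
    (S * S).trace = ∑ i, hS.eigenvalues i ^ 2 := by
  have h := hS.spectral_theorem
  have h2 : S * S = Unitary.conjStarAlgAut ℝ _ hS.eigenvectorUnitary
      (diagonal (RCLike.ofReal ∘ hS.eigenvalues) * diagonal (RCLike.ofReal ∘ hS.eigenvalues)) := by
    rw [map_mul, ← h]
  rw [h2, Unitary.conjStarAlgAut_apply, trace_mul_cycle, Unitary.coe_star_mul_self, one_mul,
    diagonal_mul_diagonal, trace_diagonal]
  simp [sq]

theorem one_le_eig {d n : ℕ} {S : Matrix (Fin n) (Fin n) ℝ} (hS : S.PosDef)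
    (ξ : Matrix (Fin d) (Fin n) ℝ) (h : S * S = 1 + ξᵀ * ξ) (i : Fin n) :
    1 ≤ hS.1.eigenvalues i := by
  have hpos := hS.eigenvalues_pos i
  have hv := hS.1.mulVec_eigenvectorBasis i
  have hne : (WithLp.ofLp (hS.1.eigenvectorBasis i)) ≠ 0 := by
    intro h0
    exact hS.1.eigenvectorBasis.orthonormal.ne_zero i (by ext j; simpa using congrFun h0 j)
  set v : Fin n → ℝ := WithLp.ofLp (hS.1.eigenvectorBasis i)
  set s := hS.1.eigenvalues i
  have h1 : v ⬝ᵥ ((S * S) *ᵥ v) = s ^ 2 * (v ⬝ᵥ v) := by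
    rw [← mulVec_mulVec, hv, mulVec_smul, hv]
    simp [sq, mul_assoc]
  have h2 : v ⬝ᵥ ((S * S) *ᵥ v) = v ⬝ᵥ v + (ξ *ᵥ v) ⬝ᵥ (ξ *ᵥ v) := by
    rw [h, add_mulVec, one_mulVec, dotProduct_add, ← mulVec_mulVec, dotProduct_mulVec v ξᵀ,
      vecMul_transpose]
  have h3 : 0 ≤ (ξ *ᵥ v) ⬝ᵥ (ξ *ᵥ v) := Finset.sum_nonneg fun j _ => mul_self_nonneg _
  have h4 : 0 < v ⬝ᵥ v := lt_of_le_of_ne (Finset.sum_nonneg fun j _ => mul_self_nonneg _)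
    (fun h0 => hne (dotProduct_self_eq_zero.mp h0.symm))
  by_contra! hlt
  have h5 : s ^ 2 < 1 := by nlinarith
  nlinarith

/-- **Second-order boundedness of the polar retraction with constant `M = 1`.**
If `x ∈ St(d,r)`, `ξ` is tangent at `x` with `‖ξ‖_F ≤ 1`, and `S` is the (unique)
positive definite square root of `I + ξᵀξ`, then
`‖(x+ξ) S⁻¹ − (x+ξ)‖_F ≤ ‖ξ‖_F²`. -/
theorem polar_retraction_second_order_bound
    (d r : ℕ) (hdr : r ≤ d) (x ξ : Matrix (Fin d) (Fin r) ℝ)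
    (hx : xᵀ * x = 1) (hξ : xᵀ * ξ + ξᵀ * x = 0) (hξnorm : frobNorm ξ ≤ 1) :
    ∀ S : Matrix (Fin r) (Fin r) ℝ, S.PosDef → S * S = 1 + ξᵀ * ξ →
      frobNorm ((x + ξ) * S⁻¹ - (x + ξ)) ≤ (frobNorm ξ) ^ 2 := by
  intro S hS hSS
  have hT : Sᵀ = S := by
    have h := hS.1.eq
    rwa [conjTranspose_eq_transpose_of_trivial] at h
  have hdet : IsUnit S.det := hS.det_pos.ne'.isUnit
  have hA : (x + ξ)ᵀ * (x + ξ) = S * S := by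
    rw [hSS, transpose_add, Matrix.add_mul, Matrix.mul_add, Matrix.mul_add, hx]
    calc _ = 1 + (xᵀ * ξ + ξᵀ * x) + ξᵀ * ξ := by abel
      _ = _ := by rw [hξ, add_zero]
  have hE : ((x + ξ) * S⁻¹ - (x + ξ))ᵀ * ((x + ξ) * S⁻¹ - (x + ξ)) = S * S - S - S + 1 := by
    have e : (x + ξ) * S⁻¹ - (x + ξ) = (x + ξ) * (S⁻¹ - 1) := by
      rw [Matrix.mul_sub, Matrix.mul_one]
    rw [e, transpose_mul, Matrix.mul_assoc, ← Matrix.mul_assoc _ (x + ξ), hA, transpose_sub,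
      transpose_nonsing_inv, hT, transpose_one]
    have a : S * S * (S⁻¹ - 1) = S - S * S := by
      rw [mul_sub, Matrix.mul_assoc, mul_nonsing_inv S hdet]; simp
    have b : (S⁻¹ - 1) * (S - S * S) = (1 - S) - (S - S * S) := by
      rw [sub_mul, mul_sub, ← Matrix.mul_assoc, nonsing_inv_mul S hdet]; simp
    rw [a, b]; abel
  have hξξ : ξᵀ * ξ = S * S - 1 := by rw [hSS]; abel
  have h1 : frobNorm ((x + ξ) * S⁻¹ - (x + ξ)) ^ 2 = ∑ i, (hS.1.eigenvalues i - 1) ^ 2 := by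
    rw [frobNorm_sq_eq, hE, trace_add, trace_sub, trace_sub, trace_sq_eq_sum hS.1,
      hS.1.trace_eq_sum_eigenvalues]
    simp only [sub_sq, Finset.sum_add_distrib, Finset.sum_sub_distrib, ← Finset.mul_sum,
      ← Finset.sum_mul]
    simp
    ring
  have h2 : frobNorm ξ ^ 2 = ∑ i, (hS.1.eigenvalues i ^ 2 - 1) := by
    rw [frobNorm_sq_eq, hξξ, trace_sub, trace_sq_eq_sum hS.1]
    simp
  have hle := one_le_eig hS ξ hSS
  have h3 : ∑ i, (hS.1.eigenvalues i - 1) ^ 2 ≤ (∑ i, (hS.1.eigenvalues i - 1)) ^ 2 :=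
    Finset.sum_sq_le_sq_sum_of_nonneg fun i _ => by linarith [hle i]
  have h4 : ∑ i, (hS.1.eigenvalues i - 1) ≤ ∑ i, (hS.1.eigenvalues i ^ 2 - 1) :=
    Finset.sum_le_sum fun i _ => by nlinarith [hle i]
  have h5 : 0 ≤ ∑ i, (hS.1.eigenvalues i - 1) :=
    Finset.sum_nonneg fun i _ => by linarith [hle i]
  have h6 : 0 ≤ frobNorm ((x + ξ) * S⁻¹ - (x + ξ)) := Real.sqrt_nonneg _
  rw [h2]
  refine (sq_le_sq₀ h6 (h5.trans h4)).mp ?_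
  rw [h1]
  exact h3.trans (pow_le_pow_left₀ h5 h4 2)
end

section
/- Let r ≤ d, let x, y be real d×r matrices with xᵀx = I_r and yᵀy = I_r, and let N be any real d×r matrix. Then ‖x(xᵀN + Nᵀx) − y(yᵀN + Nᵀy)‖_F ≤ 4 ‖N‖₂ ‖x − y‖_F, where ‖N‖₂ is the spectral norm of N. Equivalently, the normal-space projections satisfy ‖P_{N_x}(N) − P_{N_y}(N)‖_F ≤ 2 ‖N‖₂ ‖x − y‖_F, where P_{N_x}(z) := (1/2)x(xᵀz + zᵀx). -/
open Matrix

/-- Spectral (operator) norm of a real matrix. -/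
noncomputable def specNorm {m n : ℕ} (A : Matrix (Fin m) (Fin n) ℝ) : ℝ :=
  ‖LinearMap.toContinuousLinearMap (Matrix.toEuclideanLin A)‖

section FrobTriangle
open scoped Matrix.Norms.Frobenius

lemma frobNorm_eq_norm {m n : ℕ} (A : Matrix (Fin m) (Fin n) ℝ) : frobNorm A = ‖A‖ := by
  rw [Matrix.frobenius_norm_def, frobNorm, Real.sqrt_eq_rpow]
  simp

lemma frobNorm_add_le {m n : ℕ} (A B : Matrix (Fin m) (Fin n) ℝ) :
    frobNorm (A + B) ≤ frobNorm A + frobNorm B := by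
  simp only [frobNorm_eq_norm]
  exact norm_add_le A B

lemma frobNorm_smul {m n : ℕ} (c : ℝ) (A : Matrix (Fin m) (Fin n) ℝ) :
    frobNorm (c • A) = |c| * frobNorm A := by
  simp only [frobNorm_eq_norm]
  rw [norm_smul, Real.norm_eq_abs]

lemma frobNorm_transpose {m n : ℕ} (A : Matrix (Fin m) (Fin n) ℝ) :
    frobNorm Aᵀ = frobNorm A := by
  simp only [frobNorm_eq_norm]
  exact Matrix.frobenius_norm_transpose A

end FrobTriangle

lemma frobNorm_nonneg {m n : ℕ} (A : Matrix (Fin m) (Fin n) ℝ) : 0 ≤ frobNorm A :=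
  Real.sqrt_nonneg _

lemma specNorm_nonneg {m n : ℕ} (A : Matrix (Fin m) (Fin n) ℝ) : 0 ≤ specNorm A :=
  norm_nonneg _

section Spec
open scoped Matrix.Norms.L2Operator

lemma specNorm_eq_norm {m n : ℕ} (A : Matrix (Fin m) (Fin n) ℝ) : specNorm A = ‖A‖ := rfl

lemma specNorm_transpose {m n : ℕ} (A : Matrix (Fin m) (Fin n) ℝ) :
    specNorm Aᵀ = specNorm A := by
  simp only [specNorm_eq_norm]
  rw [← Matrix.conjTranspose_eq_transpose_of_trivial]
  exact Matrix.l2_opNorm_conjTranspose A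

lemma specNorm_le_one {m n : ℕ} (A : Matrix (Fin m) (Fin n) ℝ) (h : Aᵀ * A = 1) :
    specNorm A ≤ 1 := by
  have h1 := Matrix.l2_opNorm_conjTranspose_mul_self A
  rw [Matrix.conjTranspose_eq_transpose_of_trivial, h, ← Matrix.diagonal_one,
    Matrix.l2_opNorm_diagonal] at h1
  have h2 : ‖(fun _ => 1 : Fin n → ℝ)‖ ≤ 1 := by
    rw [pi_norm_le_iff_of_nonneg zero_le_one]
    simp
  rw [specNorm_eq_norm]
  nlinarith [norm_nonneg A]

lemma frobNorm_mul_left {l m n : ℕ} (A : Matrix (Fin l) (Fin m) ℝ)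
    (B : Matrix (Fin m) (Fin n) ℝ) : frobNorm (A * B) ≤ specNorm A * frobNorm B := by
  apply Real.sqrt_le_iff.mpr
  refine ⟨mul_nonneg (specNorm_nonneg A) (frobNorm_nonneg B), ?_⟩
  rw [mul_pow, frobNorm, Real.sq_sqrt (by positivity), Finset.sum_comm,
    Finset.sum_comm (f := fun i j => B i j ^ 2), Finset.mul_sum]
  refine Finset.sum_le_sum fun j _ => ?_
  have h := Matrix.l2_opNorm_mulVec A (WithLp.toLp 2 (fun i => B i j))
  have h2 := pow_le_pow_left₀ (norm_nonneg _) h 2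
  rw [mul_pow, EuclideanSpace.norm_sq_eq, EuclideanSpace.norm_sq_eq] at h2
  simpa [Matrix.mul_apply, Matrix.mulVec, dotProduct, specNorm_eq_norm] using h2

end Spec

lemma frobNorm_mul_right {l m n : ℕ} (A : Matrix (Fin l) (Fin m) ℝ)
    (B : Matrix (Fin m) (Fin n) ℝ) : frobNorm (A * B) ≤ frobNorm A * specNorm B := by
  rw [← frobNorm_transpose, Matrix.transpose_mul, ← frobNorm_transpose A, ← specNorm_transpose B,
    mul_comm]
  exact frobNorm_mul_left _ _

/-- **Lipschitz bound for normal-space projections on the Stiefel manifold.**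
For `x, y ∈ St(d,r)` and any `N ∈ ℝ^{d×r}`,
`‖x(xᵀN + Nᵀx) − y(yᵀN + Nᵀy)‖_F ≤ 4‖N‖₂‖x − y‖_F`, and equivalently for the
normal-space projections `P_{N_x}(N) = (1/2)x(xᵀN + Nᵀx)`,
`‖P_{N_x}(N) − P_{N_y}(N)‖_F ≤ 2‖N‖₂‖x − y‖_F`. -/
theorem normal_projection_lipschitz
    (d r : ℕ) (hdr : r ≤ d) (x y N : Matrix (Fin d) (Fin r) ℝ)
    (hx : xᵀ * x = 1) (hy : yᵀ * y = 1) :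
    frobNorm (x * (xᵀ * N + Nᵀ * x) - y * (yᵀ * N + Nᵀ * y)) ≤
      4 * specNorm N * frobNorm (x - y) ∧
    frobNorm ((1 / 2 : ℝ) • (x * (xᵀ * N + Nᵀ * x)) -
        (1 / 2 : ℝ) • (y * (yᵀ * N + Nᵀ * y))) ≤
      2 * specNorm N * frobNorm (x - y) := by
  have hx1 := specNorm_le_one x hx
  have hy1 := specNorm_le_one y hy
  have hN0 := specNorm_nonneg N
  have hD0 := frobNorm_nonneg (x - y)
  have hND : 0 ≤ specNorm N * frobNorm (x - y) := mul_nonneg hN0 hD0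
  have hxl : ∀ B : Matrix (Fin r) (Fin r) ℝ, frobNorm (x * B) ≤ frobNorm B := fun B =>
    (frobNorm_mul_left x B).trans (mul_le_of_le_one_left (frobNorm_nonneg B) hx1)
  have h1 : frobNorm (x * ((x - y)ᵀ * N)) ≤ specNorm N * frobNorm (x - y) := by
    refine (hxl _).trans ((frobNorm_mul_right _ _).trans ?_)
    rw [frobNorm_transpose, mul_comm]
  have h2 : frobNorm ((x - y) * yᵀ * N) ≤ specNorm N * frobNorm (x - y) := by
    refine (frobNorm_mul_right _ _).trans ?_
    rw [mul_comm]
    refine mul_le_mul_of_nonneg_left ((frobNorm_mul_right _ _).trans ?_) hN0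
    rw [specNorm_transpose]
    exact mul_le_of_le_one_right hD0 hy1
  have h3 : frobNorm (x * (Nᵀ * (x - y))) ≤ specNorm N * frobNorm (x - y) := by
    refine (hxl _).trans ((frobNorm_mul_left _ _).trans ?_)
    rw [specNorm_transpose]
  have h4 : frobNorm ((x - y) * Nᵀ * y) ≤ specNorm N * frobNorm (x - y) := by
    refine (frobNorm_mul_right _ _).trans
      ((mul_le_of_le_one_right (frobNorm_nonneg _) hy1).trans ((frobNorm_mul_right _ _).trans ?_))
    rw [specNorm_transpose, mul_comm]
  have e : x * (xᵀ * N + Nᵀ * x) - y * (yᵀ * N + Nᵀ * y) =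
      (x * ((x - y)ᵀ * N) + (x - y) * yᵀ * N) + (x * (Nᵀ * (x - y)) + (x - y) * Nᵀ * y) := by
    simp only [Matrix.transpose_sub, Matrix.mul_add, Matrix.mul_sub, Matrix.sub_mul,
      Matrix.mul_assoc]
    abel
  have main : frobNorm (x * (xᵀ * N + Nᵀ * x) - y * (yᵀ * N + Nᵀ * y)) ≤
      4 * specNorm N * frobNorm (x - y) := by
    rw [e]
    have t1 := frobNorm_add_le (x * ((x - y)ᵀ * N) + (x - y) * yᵀ * N)
      (x * (Nᵀ * (x - y)) + (x - y) * Nᵀ * y)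
    have t2 := frobNorm_add_le (x * ((x - y)ᵀ * N)) ((x - y) * yᵀ * N)
    have t3 := frobNorm_add_le (x * (Nᵀ * (x - y))) ((x - y) * Nᵀ * y)
    linarith
  refine ⟨main, ?_⟩
  rw [← smul_sub, frobNorm_smul, abs_of_pos (by norm_num : (0 : ℝ) < 1 / 2)]
  linarith
end

section
/- Let r ≤ d, let x, y be real d×r matrices with xᵀx = I_r and yᵀy = I_r, and let N be any real d×r matrix. Set g := N − (1/2)x(xᵀN + Nᵀx) (the projection of N onto the tangent space at x). Then |⟨g, y − x⟩ − ⟨N, y − x⟩| ≤ (1/2) ‖N‖₂ ‖y − x‖_F², where ⟨A,B⟩ = trace(AᵀB) and ‖N‖₂ is the spectral norm of N. -/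
open Matrix

/-- Frobenius inner product `⟨A, B⟩ = trace (AᵀB)` of real matrices. -/
noncomputable def finner {m n : ℕ} (A B : Matrix (Fin m) (Fin n) ℝ) : ℝ :=
  (Aᵀ * B).trace

lemma aux_vec {m n : ℕ} (x N : Matrix (Fin m) (Fin n) ℝ) (hx : xᵀ * x = 1) (v : Fin n → ℝ) :
    |(x *ᵥ v) ⬝ᵥ (N *ᵥ v)| ≤ specNorm N * (v ⬝ᵥ v) := by
  have hN : ‖WithLp.toLp 2 (N *ᵥ v)‖ ≤ specNorm N * ‖WithLp.toLp 2 v‖ :=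
    (LinearMap.toContinuousLinearMap (Matrix.toEuclideanLin N)).le_opNorm (WithLp.toLp 2 v)
  have hsq : ∀ {k : ℕ} (w : Fin k → ℝ), ‖WithLp.toLp 2 w‖ ^ 2 = w ⬝ᵥ w := by
    intro k w
    rw [EuclideanSpace.real_norm_sq_eq]
    simp [dotProduct, sq]
  have hxn : ‖WithLp.toLp 2 (x *ᵥ v)‖ = ‖WithLp.toLp 2 v‖ := by
    rw [← sq_eq_sq₀ (norm_nonneg _) (norm_nonneg _), hsq, hsq, Matrix.dotProduct_mulVec,
      Matrix.vecMul_mulVec, ← Matrix.dotProduct_mulVec, hx, Matrix.one_mulVec]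
  have h := abs_real_inner_le_norm (WithLp.toLp 2 (N *ᵥ v)) (WithLp.toLp 2 (x *ᵥ v))
  rw [EuclideanSpace.inner_toLp_toLp] at h
  simp only [star_trivial] at h
  rw [hxn] at h
  rw [← hsq]
  nlinarith [mul_le_mul_of_nonneg_right hN (norm_nonneg (WithLp.toLp 2 v))]

lemma aux_trace {m n : ℕ} (x N D : Matrix (Fin m) (Fin n) ℝ)
    (hD : xᵀ * D + Dᵀ * x = -(Dᵀ * D)) :
    ((xᵀ * N + Nᵀ * x) * (xᵀ * D)).trace = -(xᵀ * N * (Dᵀ * D)).trace := by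
  have h1 : ((xᵀ * N + Nᵀ * x) * (xᵀ * D)).trace = ((xᵀ * N + Nᵀ * x) * (Dᵀ * x)).trace := by
    rw [← Matrix.trace_transpose, Matrix.transpose_mul, Matrix.trace_mul_comm]
    simp [add_comm]
  have h2 : (Nᵀ * x * (Dᵀ * D)).trace = (xᵀ * N * (Dᵀ * D)).trace := by
    rw [← Matrix.trace_transpose, Matrix.transpose_mul, Matrix.trace_mul_comm]
    simp
  have h3 : ((xᵀ * N + Nᵀ * x) * (xᵀ * D)).trace + ((xᵀ * N + Nᵀ * x) * (Dᵀ * x)).trace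
      = -((xᵀ * N * (Dᵀ * D)).trace + (Nᵀ * x * (Dᵀ * D)).trace) := by
    rw [← Matrix.trace_add, ← Matrix.mul_add, hD, Matrix.mul_neg, Matrix.trace_neg,
      Matrix.add_mul, Matrix.trace_add]
  linarith

lemma aux_sum {m n : ℕ} (x N D : Matrix (Fin m) (Fin n) ℝ) :
    (xᵀ * N * (Dᵀ * D)).trace = ∑ i, (x *ᵥ D i) ⬝ᵥ (N *ᵥ D i) := by
  rw [← Matrix.mul_assoc, Matrix.trace_mul_comm, Matrix.trace]
  refine Finset.sum_congr rfl fun i _ => ?_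
  rw [Matrix.dotProduct_mulVec, Matrix.vecMul_mulVec, ← Matrix.dotProduct_mulVec]
  rfl

/-- **Comparing the tangent-projected and Euclidean inner products.**
For `x, y ∈ St(d,r)`, any `N ∈ ℝ^{d×r}`, and `g = N − (1/2)x(xᵀN + Nᵀx)` the
projection of `N` onto the tangent space at `x`, one has
`|⟨g, y − x⟩ − ⟨N, y − x⟩| ≤ (1/2)‖N‖₂‖y − x‖_F²`. -/
theorem tangent_projection_inner_product_bound
    (d r : ℕ) (hdr : r ≤ d) (x y N : Matrix (Fin d) (Fin r) ℝ)
    (hx : xᵀ * x = 1) (hy : yᵀ * y = 1) :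
    |finner (N - (1 / 2 : ℝ) • (x * (xᵀ * N + Nᵀ * x))) (y - x) - finner N (y - x)| ≤
      (1 / 2 : ℝ) * specNorm N * (frobNorm (y - x)) ^ 2 := by
  set D := y - x with hDdef
  have hD : xᵀ * D + Dᵀ * x = -(Dᵀ * D) := by
    simp only [hDdef, Matrix.transpose_sub, Matrix.mul_sub, Matrix.sub_mul, hx, hy]
    abel
  have key : finner (N - (1 / 2 : ℝ) • (x * (xᵀ * N + Nᵀ * x))) D - finner N D
      = (1 / 2) * ∑ i, (x *ᵥ D i) ⬝ᵥ (N *ᵥ D i) := by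
    have h := aux_trace x N D hD
    rw [aux_sum] at h
    have h2 : (x * (xᵀ * N + Nᵀ * x))ᵀ * D = (xᵀ * N + Nᵀ * x) * (xᵀ * D) := by
      rw [Matrix.transpose_mul, Matrix.mul_assoc]
      simp [add_comm]
    unfold finner
    rw [Matrix.transpose_sub, Matrix.transpose_smul, Matrix.sub_mul, Matrix.smul_mul, h2,
      Matrix.trace_sub, Matrix.trace_smul, h, smul_eq_mul]
    ring
  have hF : frobNorm D ^ 2 = ∑ i, D i ⬝ᵥ D i := by
    unfold frobNorm
    rw [Real.sq_sqrt (by positivity)]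
    simp [dotProduct, sq]
  rw [key, hF, abs_mul, abs_of_pos (by norm_num : (0:ℝ) < 1 / 2), mul_assoc, Finset.mul_sum]
  refine mul_le_mul_of_nonneg_left ?_ (by norm_num)
  exact (Finset.abs_sum_le_sum_abs _ _).trans (Finset.sum_le_sum fun i _ => aux_vec x N hx (D i))
end

section
/- Let η ∈ (0,1) and let (u_k)_{k≥0} and (w_k)_{k≥0} be sequences of positive real numbers such that u_{k+1} ≤ η u_k + w_k for all k ≥ 0. Then for every k ≥ 0: ∑_{l=0}^{k} u_l² ≤ (2/(1−η)²) ∑_{l=0}^{k} w_l² + (2/(1−η²)) u_0². -/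
/-- **Recursive bound for squared sums** (Lemma 2 of Xu et al., modified).
If `η ∈ (0,1)` and the positive sequences `u, w` satisfy `u_{k+1} ≤ η u_k + w_k`,
then `∑_{l=0}^k u_l² ≤ (2/(1−η)²) ∑_{l=0}^k w_l² + (2/(1−η²)) u_0²`. -/
theorem recursive_squared_sum_bound
    (η : ℝ) (hη0 : 0 < η) (hη1 : η < 1)
    (u w : ℕ → ℝ) (hu : ∀ k, 0 < u k) (hw : ∀ k, 0 < w k)
    (hrec : ∀ k, u (k + 1) ≤ η * u k + w k) :
    ∀ k, ∑ l ∈ Finset.range (k + 1), (u l) ^ 2 ≤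
      (2 / (1 - η) ^ 2) * ∑ l ∈ Finset.range (k + 1), (w l) ^ 2 +
        (2 / (1 - η ^ 2)) * (u 0) ^ 2 := by
  have h1 : 0 < 1 - η := by linarith
  have step : ∀ k, (1 - η) * u (k + 1) ^ 2 ≤ (1 - η) * η * u k ^ 2 + w k ^ 2 := by
    intro k
    have h2 : u (k + 1) ^ 2 ≤ (η * u k + w k) ^ 2 :=
      pow_le_pow_left₀ (hu _).le (hrec k) 2
    have h3 := mul_le_mul_of_nonneg_left h2 h1.le
    have h4 := mul_nonneg hη0.le (sq_nonneg ((1 - η) * u k - w k))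
    nlinarith
  have key : ∀ n, (1 - η) ^ 2 * ∑ l ∈ Finset.range n, (u l) ^ 2 + (1 - η) * u n ^ 2 ≤
      ∑ l ∈ Finset.range n, (w l) ^ 2 + (1 - η) * u 0 ^ 2 := by
    intro n
    induction n with
    | zero => simp
    | succ n ih =>
      rw [Finset.sum_range_succ, Finset.sum_range_succ]
      linarith [step n]
  intro k
  have hk := key (k + 1)
  set S := ∑ l ∈ Finset.range (k + 1), (u l) ^ 2
  have hW : 0 ≤ ∑ l ∈ Finset.range (k + 1), (w l) ^ 2 :=
    Finset.sum_nonneg fun i _ => sq_nonneg _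
  set W := ∑ l ∈ Finset.range (k + 1), (w l) ^ 2
  have hp : 0 ≤ (1 - η) * u (k + 1) ^ 2 := by positivity
  have h5 : S ≤ (W + (1 - η) * u 0 ^ 2) / (1 - η) ^ 2 := by
    rw [le_div_iff₀ (by positivity)]
    linarith
  have h6 : (W + (1 - η) * u 0 ^ 2) / (1 - η) ^ 2
      = 1 / (1 - η) ^ 2 * W + 1 / (1 - η) * u 0 ^ 2 := by
    field_simp
  have h7 : 1 / (1 - η) ≤ 2 / (1 - η ^ 2) := by
    rw [div_le_div_iff₀ h1 (by nlinarith)]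
    nlinarith
  have h8 : 1 / (1 - η) ^ 2 ≤ 2 / (1 - η) ^ 2 := by
    gcongr
    norm_num
  have h9 := mul_le_mul_of_nonneg_right h7 (sq_nonneg (u 0))
  have h10 := mul_le_mul_of_nonneg_right h8 hW
  linarith
end

section
/- Let ρ ∈ (0,1), D ≥ 0, b > 0 and p ∈ (0,1], and define β_k := b/(k+1)^p for k ≥ 0. Let (a_k)_{k≥0} be a sequence of nonnegative real numbers satisfying a_{k+1} ≤ ρ a_k + D β_k for all k ≥ 0. Then there exists a constant C > 0 such that a_k ≤ C β_k for all k ≥ 0; in other words, the sequence (a_k/β_k) is bounded. -/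
/-- **Contracting recursion with polynomially decaying forcing term.**
If `ρ ∈ (0,1)`, `D ≥ 0`, `b > 0`, `p ∈ (0,1]`, `β_k = b/(k+1)^p`, and the nonnegative
sequence `a` satisfies `a_{k+1} ≤ ρ a_k + D β_k`, then there is a constant `C > 0`
with `a_k ≤ C β_k` for all `k`; i.e. `(a_k/β_k)` is bounded. -/
theorem contracting_recursion_polynomial_stepsize
    (ρ D b p : ℝ) (hρ0 : 0 < ρ) (hρ1 : ρ < 1) (hD : 0 ≤ D) (hb : 0 < b)
    (hp0 : 0 < p) (hp1 : p ≤ 1)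
    (β : ℕ → ℝ) (hβ : ∀ k, β k = b / ((k : ℝ) + 1) ^ p)
    (a : ℕ → ℝ) (ha : ∀ k, 0 ≤ a k)
    (hrec : ∀ k, a (k + 1) ≤ ρ * a k + D * β k) :
    ∃ C > 0, ∀ k, a k ≤ C * β k := by
  have hβpos : ∀ k, 0 < β k := by
    intro k
    rw [hβ]
    positivity
  have hratio : ∀ k : ℕ, β k ≤ (1 + 1 / ((k : ℝ) + 1)) * β (k + 1) := by
    intro k
    have h1 : (0 : ℝ) < (k : ℝ) + 1 := by positivity
    have h2 : (0 : ℝ) < (k : ℝ) + 1 + 1 := by positivity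
    have e : (1 + 1 / ((k : ℝ) + 1)) = ((k : ℝ) + 1 + 1) / ((k : ℝ) + 1) := by
      field_simp
    have hr : (((k : ℝ) + 1 + 1) / ((k : ℝ) + 1)) ^ p ≤ ((k : ℝ) + 1 + 1) / ((k : ℝ) + 1) := by
      have h3 : 1 ≤ ((k : ℝ) + 1 + 1) / ((k : ℝ) + 1) := by
        rw [le_div_iff₀ h1]; linarith
      simpa using Real.rpow_le_rpow_of_exponent_le h3 hp1
    rw [Real.div_rpow h2.le h1.le] at hr
    have q1 : 0 < ((k : ℝ) + 1) ^ p := Real.rpow_pos_of_pos h1 p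
    have q2 : 0 < ((k : ℝ) + 1 + 1) ^ p := Real.rpow_pos_of_pos h2 p
    have hpos := hβpos (k + 1)
    calc β k = (((k : ℝ) + 1 + 1) ^ p / ((k : ℝ) + 1) ^ p) * β (k + 1) := by
          rw [hβ, hβ]; push_cast; field_simp
      _ ≤ _ := by rw [e]; exact mul_le_mul_of_nonneg_right hr hpos.le
  have hδ : 0 < 1 - ρ := by linarith
  obtain ⟨N, hN⟩ := exists_nat_ge (2 / (1 - ρ))
  have hsum : 0 ≤ ∑ i ∈ Finset.range (N + 1), a i / β i :=
    Finset.sum_nonneg fun i _ => div_nonneg (ha i) (hβpos i).le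
  have hDd : 0 ≤ 4 * D / (1 - ρ) := by positivity
  obtain ⟨C, hC⟩ : ∃ C, C = (∑ i ∈ Finset.range (N + 1), a i / β i) + 4 * D / (1 - ρ) + 1 :=
    ⟨_, rfl⟩
  have hCpos : 0 < C := by linarith
  have hCD : 4 * D ≤ C * (1 - ρ) := by
    rw [← div_le_iff₀ hδ]; linarith
  have hsmall : ∀ k, k ≤ N → a k ≤ C * β k := by
    intro k hk
    rw [← div_le_iff₀ (hβpos k)]
    have := Finset.single_le_sum (f := fun i => a i / β i) (s := Finset.range (N + 1))
      (fun i _ => div_nonneg (ha i) (hβpos i).le) (Finset.mem_range.2 (Nat.lt_succ_of_le hk))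
    linarith
  refine ⟨C, hCpos, fun k => ?_⟩
  induction k with
  | zero => exact hsmall 0 (Nat.zero_le _)
  | succ k ih =>
    rcases Nat.lt_or_ge k N with h | h
    · exact hsmall _ h
    · have h1 : (0 : ℝ) < (k : ℝ) + 1 := by positivity
      have hkN : (N : ℝ) ≤ k := by exact_mod_cast h
      obtain ⟨t, ht⟩ : ∃ t, t = 1 / ((k : ℝ) + 1) := ⟨_, rfl⟩
      have hr := hratio k
      rw [← ht] at hr
      have ht0 : 0 < t := by rw [ht]; positivity
      have ht1 : t ≤ 1 := by
        rw [ht, div_le_one h1]; linarith [(Nat.cast_nonneg k : (0 : ℝ) ≤ k)]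
      have ht2 : t ≤ (1 - ρ) / 2 := by
        rw [ht, div_le_iff₀ h1]
        have := (div_le_iff₀ hδ).1 hN
        nlinarith
      have hcoef : 0 ≤ ρ * C + D := by positivity
      have hfin : (ρ * C + D) * (1 + t) ≤ C := by
        have e1 : D * t ≤ D := mul_le_of_le_one_right hD ht1
        have e2 : ρ * C * t ≤ C * ((1 - ρ) / 2) := by
          have : ρ * t ≤ (1 - ρ) / 2 := by nlinarith
          nlinarith
        nlinarith
      calc a (k + 1) ≤ ρ * a k + D * β k := hrec k
        _ ≤ ρ * (C * β k) + D * β k := by gcongr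
        _ = (ρ * C + D) * β k := by ring
        _ ≤ (ρ * C + D) * ((1 + t) * β (k + 1)) := mul_le_mul_of_nonneg_left hr hcoef
        _ = (ρ * C + D) * (1 + t) * β (k + 1) := by ring
        _ ≤ C * β (k + 1) := mul_le_mul_of_nonneg_right hfin (hβpos _).le
end

section
/- Let W ∈ ℝ^{n×n} be symmetric and doubly stochastic, let J := (1/n)𝟙𝟙ᵀ, let σ₂ := ‖W − J‖₂, and fix an integer t ≥ 1. Let y_1,…,y_n, G_1,…,G_n, G'_1,…,G'_n be real d×r matrices with (1/n)∑_i y_i = (1/n)∑_i G_i, and define the gradient-tracking update y'_i := ∑_{j=1}^n (W^t)_{ij} y_j + G'_i − G_i for each i. Let Ĝ := (1/n)∑_i G_i and Ĝ' := (1/n)∑_i G'_i. Then (1/n)∑_i y'_i = Ĝ' and ( ∑_{i=1}^n ‖y'_i − Ĝ'‖_F² )^{1/2} ≤ σ₂^t ( ∑_{i=1}^n ‖y_i − Ĝ‖_F² )^{1/2} + ( ∑_{i=1}^n ‖G'_i − G_i‖_F² )^{1/2}. -/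
open Matrix

lemma gt_frob_sq {m n : ℕ} (A : Matrix (Fin m) (Fin n) ℝ) :
    frobNorm A ^ 2 = ∑ i, ∑ j, (A i j) ^ 2 := by
  unfold frobNorm
  exact Real.sq_sqrt (Finset.sum_nonneg fun i _ => Finset.sum_nonneg fun j _ => sq_nonneg _)

lemma gt_spec_bound {n : ℕ} (A : Matrix (Fin n) (Fin n) ℝ) (v : Fin n → ℝ) :
    ∑ i, ((A *ᵥ v) i) ^ 2 ≤ specNorm A ^ 2 * ∑ i, (v i) ^ 2 := by
  have h := (LinearMap.toContinuousLinearMap (Matrix.toEuclideanLin A)).le_opNorm (WithLp.toLp 2 v)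
  have h2 := pow_le_pow_left₀ (norm_nonneg _) h 2
  rw [mul_pow, EuclideanSpace.real_norm_sq_eq, EuclideanSpace.real_norm_sq_eq] at h2
  exact h2

lemma gt_pow_row {n : ℕ} (W : Matrix (Fin n) (Fin n) ℝ) (hrow : ∀ i, ∑ j, W i j = 1) (t : ℕ) :
    ∀ i, ∑ j, (W ^ t) i j = 1 := by
  have h1 : W *ᵥ 1 = 1 := by
    ext i; simp [Matrix.mulVec, dotProduct, hrow]
  have h : (W ^ t) *ᵥ 1 = 1 := by
    induction t with
    | zero => simp
    | succ k ih => rw [pow_succ, ← Matrix.mulVec_mulVec, h1, ih]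
  intro i
  have := congrFun h i
  simpa [Matrix.mulVec, dotProduct] using this

lemma gt_pow_col {n : ℕ} (W : Matrix (Fin n) (Fin n) ℝ) (hcol : ∀ j, ∑ i, W i j = 1) (t : ℕ) :
    ∀ j, ∑ i, (W ^ t) i j = 1 := by
  intro j
  have := gt_pow_row Wᵀ hcol t j
  rw [← Matrix.transpose_pow] at this
  exact this

lemma gt_sum_mulVec {n : ℕ} (W : Matrix (Fin n) (Fin n) ℝ) (hcol : ∀ j, ∑ i, W i j = 1)
    (v : Fin n → ℝ) : ∑ i, (W *ᵥ v) i = ∑ i, v i := by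
  simp only [Matrix.mulVec, dotProduct]
  rw [Finset.sum_comm]
  simp [← Finset.sum_mul, hcol]

lemma gt_contract {n : ℕ} (W : Matrix (Fin n) (Fin n) ℝ) (hcol : ∀ j, ∑ i, W i j = 1) (t : ℕ) :
    ∀ v : Fin n → ℝ, ∑ i, v i = 0 → ∑ i, (((W ^ t) *ᵥ v) i) ^ 2 ≤
      (specNorm (W - (n : ℝ)⁻¹ • (Matrix.of fun _ _ => (1 : ℝ))) ^ t) ^ 2 * ∑ i, (v i) ^ 2 := by
  induction t with
  | zero => intro v _; simp
  | succ k ih =>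
    intro v hv
    have h1 := ih (W *ᵥ v) (by rw [gt_sum_mulVec W hcol, hv])
    have h2 := gt_spec_bound (W - (n : ℝ)⁻¹ • (Matrix.of fun _ _ => (1 : ℝ))) v
    have h3 : (W - (n : ℝ)⁻¹ • (Matrix.of fun _ _ => (1 : ℝ))) *ᵥ v = W *ᵥ v := by
      rw [Matrix.sub_mulVec, Matrix.smul_mulVec]
      ext i
      simp [Matrix.mulVec, dotProduct, hv]
    rw [h3] at h2
    rw [pow_succ W, ← Matrix.mulVec_mulVec]
    refine h1.trans ((mul_le_mul_of_nonneg_left h2 (sq_nonneg _)).trans (le_of_eq ?_))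
    ring

lemma gt_var {n : ℕ} (hn : 0 < n) (x : Fin n → ℝ) :
    ∑ i, (x i - (n : ℝ)⁻¹ * ∑ l, x l) ^ 2 ≤ ∑ i, (x i) ^ 2 := by
  have hn' : (n : ℝ) ≠ 0 := by positivity
  have : ∑ i, (x i - (n : ℝ)⁻¹ * ∑ l, x l) ^ 2
      = ∑ i, (x i) ^ 2 - (n : ℝ)⁻¹ * (∑ l, x l) ^ 2 := by
    simp only [sub_sq, Finset.sum_add_distrib, Finset.sum_sub_distrib, ← Finset.sum_mul,
      ← Finset.mul_sum]
    simp
    field_simp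
    ring
  rw [this]
  have : 0 ≤ (n : ℝ)⁻¹ * (∑ l, x l) ^ 2 := by positivity
  linarith

lemma gt_minkowski {n d r : ℕ} (A B : Fin n → Matrix (Fin d) (Fin r) ℝ) :
    Real.sqrt (∑ i, frobNorm (A i + B i) ^ 2) ≤
      Real.sqrt (∑ i, frobNorm (A i) ^ 2) + Real.sqrt (∑ i, frobNorm (B i) ^ 2) := by
  have key : ∀ C : Fin n → Matrix (Fin d) (Fin r) ℝ, Real.sqrt (∑ i, frobNorm (C i) ^ 2) =
      ‖(WithLp.toLp 2 (fun p : Fin n × Fin d × Fin r => C p.1 p.2.1 p.2.2) :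
        EuclideanSpace ℝ (Fin n × Fin d × Fin r))‖ := by
    intro C
    rw [EuclideanSpace.norm_eq]
    simp [gt_frob_sq, Fintype.sum_prod_type]
  rw [key A, key B, key (fun i => A i + B i)]
  exact norm_add_le (WithLp.toLp 2 (fun p : Fin n × Fin d × Fin r => A p.1 p.2.1 p.2.2) :
        EuclideanSpace ℝ (Fin n × Fin d × Fin r))
        (WithLp.toLp 2 (fun p : Fin n × Fin d × Fin r => B p.1 p.2.1 p.2.2))

lemma gt_sum_swap {n d r : ℕ} (A : Fin n → Matrix (Fin d) (Fin r) ℝ) :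
    ∑ i, frobNorm (A i) ^ 2 = ∑ a, ∑ b, ∑ i, (A i a b) ^ 2 := by
  simp only [gt_frob_sq]
  rw [Finset.sum_comm]
  refine Finset.sum_congr rfl fun a _ => ?_
  rw [Finset.sum_comm]

/-- **Gradient-tracking error recursion.**
Let `W` be symmetric doubly stochastic, `σ₂ = ‖W − J‖₂`, and fix `t ≥ 1`.  Given
tracking variables `y_i` and gradients `G_i, G'_i` with `(1/n)∑ y_i = (1/n)∑ G_i`,
the update `y'_i = ∑_j (W^t)_{ij} y_j + G'_i − G_i` preserves the average
(`(1/n)∑ y'_i = (1/n)∑ G'_i`) and satisfies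
`(∑_i ‖y'_i − Ĝ'‖_F²)^{1/2} ≤ σ₂^t (∑_i ‖y_i − Ĝ‖_F²)^{1/2} + (∑_i ‖G'_i − G_i‖_F²)^{1/2}`. -/
theorem gradient_tracking_error_recursion
    (n d r : ℕ) (hn : 0 < n) (W : Matrix (Fin n) (Fin n) ℝ)
    (hsymm : Wᵀ = W)
    (hnonneg : ∀ i j, 0 ≤ W i j)
    (hrow : ∀ i, ∑ j, W i j = 1)
    (hcol : ∀ j, ∑ i, W i j = 1)
    (t : ℕ) (ht : 1 ≤ t)
    (y G G' y' : Fin n → Matrix (Fin d) (Fin r) ℝ)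
    (hmean : (n : ℝ)⁻¹ • ∑ i, y i = (n : ℝ)⁻¹ • ∑ i, G i)
    (hupdate : ∀ i, y' i = (∑ j, (W ^ t) i j • y j) + G' i - G i) :
    (n : ℝ)⁻¹ • ∑ i, y' i = (n : ℝ)⁻¹ • ∑ i, G' i ∧
    Real.sqrt (∑ i, (frobNorm (y' i - (n : ℝ)⁻¹ • ∑ l, G' l)) ^ 2) ≤
      (specNorm (W - (n : ℝ)⁻¹ • (Matrix.of fun _ _ => (1 : ℝ)))) ^ t *
          Real.sqrt (∑ i, (frobNorm (y i - (n : ℝ)⁻¹ • ∑ l, G l)) ^ 2) +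
        Real.sqrt (∑ i, (frobNorm (G' i - G i)) ^ 2) := by
  have hn' : (n : ℝ) ≠ 0 := by positivity
  have hsumW : ∑ i, ∑ j, (W ^ t) i j • y j = ∑ j, y j := by
    rw [Finset.sum_comm]
    simp [← Finset.sum_smul, gt_pow_col W hcol t]
  have havg : (n : ℝ)⁻¹ • ∑ i, y' i = (n : ℝ)⁻¹ • ∑ i, G' i := by
    simp only [hupdate, Finset.sum_sub_distrib, Finset.sum_add_distrib, hsumW, smul_sub, smul_add]
    rw [hmean]; abel
  refine ⟨havg, ?_⟩
  have hsplit : ∀ i, y' i - (n : ℝ)⁻¹ • ∑ l, G' l =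
      (∑ j, (W ^ t) i j • (y j - (n : ℝ)⁻¹ • ∑ l, G l)) +
        ((G' i - G i) - (n : ℝ)⁻¹ • ∑ l, (G' l - G l)) := by
    intro i
    simp only [smul_sub, Finset.sum_sub_distrib, ← Finset.sum_smul, gt_pow_row W hrow t i,
      one_smul, hupdate]
    abel
  have hnn : 0 ≤ specNorm (W - (n : ℝ)⁻¹ • (Matrix.of fun _ _ => (1 : ℝ))) := norm_nonneg _
  simp only [hsplit]
  refine (gt_minkowski _ _).trans (add_le_add ?_ ?_)
  · rw [← Real.sqrt_sq (pow_nonneg hnn t), ← Real.sqrt_mul (sq_nonneg _)]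
    refine Real.sqrt_le_sqrt ?_
    rw [gt_sum_swap, gt_sum_swap, Finset.mul_sum]
    refine Finset.sum_le_sum fun a _ => ?_
    rw [Finset.mul_sum]
    refine Finset.sum_le_sum fun b _ => ?_
    have h := gt_contract W hcol t (fun i => (y i - (n : ℝ)⁻¹ • ∑ l, G l) a b) (by
      have h0 : ∑ i, (y i - (n : ℝ)⁻¹ • ∑ l, G l) = 0 := by
        rw [Finset.sum_sub_distrib, ← hmean]
        simp [← Nat.cast_smul_eq_nsmul ℝ, smul_smul, hn']
      have := congrFun (congrFun h0 a) b
      simpa [Matrix.sum_apply] using this)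
    refine le_trans (le_of_eq ?_) h
    refine Finset.sum_congr rfl fun i _ => ?_
    simp [Matrix.mulVec, dotProduct, Matrix.sum_apply]
  · refine Real.sqrt_le_sqrt ?_
    rw [gt_sum_swap, gt_sum_swap]
    refine Finset.sum_le_sum fun a _ => Finset.sum_le_sum fun b _ => ?_
    have h := gt_var hn (fun i => (G' i - G i) a b)
    refine le_trans (le_of_eq ?_) h
    refine Finset.sum_congr rfl fun i _ => ?_
    simp [Matrix.sum_apply]
end

section
/- Let r ≤ d, n ≥ 1, α ≥ 0, β ≥ 0 and ρ ≥ 0. Let x_1,…,x_n be real d×r matrices with x_iᵀx_i = I_r, and let g_1,…,g_n, v_1,…,v_n be real d×r matrices. Suppose: (i) x̄ is a real d×r matrix with x̄ᵀx̄ = I_r satisfying ∑_i ‖x_i − x̄‖_F² ≤ ∑_i ‖x_i − y‖_F² for every y with yᵀy = I_r (an induced arithmetic mean of x_1,…,x_n); (ii) the updated points x'_1,…,x'_n satisfy (x'_i)ᵀx'_i = I_r and the retraction nonexpansiveness bound ‖x'_i − y‖_F ≤ ‖x_i − α g_i + β v_i − y‖_F for every y with yᵀy = I_r; (iii) x̄'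 is an induced arithmetic mean of x'_1,…,x'_n in the sense of (i); and (iv) the consensus contraction ( ∑_i ‖x_i − α g_i − x̄‖_F² )^{1/2} ≤ ρ ( ∑_i ‖x_i − x̄‖_F² )^{1/2} holds. Then ( ∑_i ‖x'_i − x̄'‖_F² )^{1/2} ≤ ρ ( ∑_i ‖x_i − x̄‖_F² )^{1/2} + β ( ∑_i ‖v_i‖_F² )^{1/2}. -/
open Matrix

theorem famNorm_eq {d r n : ℕ} (A : Fin n → Matrix (Fin d) (Fin r) ℝ) :
    Real.sqrt (∑ i, (frobNorm (A i)) ^ 2) =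
      ‖(WithLp.toLp 2 (fun p : Fin n × Fin d × Fin r => A p.1 p.2.1 p.2.2) :
        EuclideanSpace ℝ (Fin n × Fin d × Fin r))‖ := by
  rw [EuclideanSpace.norm_eq]
  congr 1
  simp only [Fintype.sum_prod_type, Real.norm_eq_abs, sq_abs]
  refine Finset.sum_congr rfl fun i _ => ?_
  rw [frobNorm, Real.sq_sqrt]
  exact Finset.sum_nonneg fun _ _ => Finset.sum_nonneg fun _ _ => sq_nonneg _

/-- **Recursive consensus-error bound for retraction-based updates.**
If `x̄` is an induced arithmetic mean of the Stiefel points `x_i`, the updated Stiefel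
points `x'_i` satisfy the retraction nonexpansiveness bound with respect to
`x_i − α g_i + β v_i`, `x̄'` is an induced arithmetic mean of the `x'_i`, and the
consensus step contracts with factor `ρ`, then
`(∑_i ‖x'_i − x̄'‖_F²)^{1/2} ≤ ρ (∑_i ‖x_i − x̄‖_F²)^{1/2} + β (∑_i ‖v_i‖_F²)^{1/2}`. -/
theorem consensus_error_recursion
    (d r n : ℕ) (hdr : r ≤ d) (hn : 1 ≤ n) (α β ρ : ℝ)
    (hα : 0 ≤ α) (hβ : 0 ≤ β) (hρ : 0 ≤ ρ)
    (x x' g v : Fin n → Matrix (Fin d) (Fin r) ℝ)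
    (xbar xbar' : Matrix (Fin d) (Fin r) ℝ)
    (hx : ∀ i, (x i)ᵀ * x i = 1)
    (hxbar : xbarᵀ * xbar = 1)
    (hIAM : ∀ y : Matrix (Fin d) (Fin r) ℝ, yᵀ * y = 1 →
      ∑ i, (frobNorm (x i - xbar)) ^ 2 ≤ ∑ i, (frobNorm (x i - y)) ^ 2)
    (hx' : ∀ i, (x' i)ᵀ * x' i = 1)
    (hretr : ∀ i, ∀ y : Matrix (Fin d) (Fin r) ℝ, yᵀ * y = 1 →
      frobNorm (x' i - y) ≤ frobNorm (x i - α • g i + β • v i - y))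
    (hxbar' : xbar'ᵀ * xbar' = 1)
    (hIAM' : ∀ y : Matrix (Fin d) (Fin r) ℝ, yᵀ * y = 1 →
      ∑ i, (frobNorm (x' i - xbar')) ^ 2 ≤ ∑ i, (frobNorm (x' i - y)) ^ 2)
    (hcontr : Real.sqrt (∑ i, (frobNorm (x i - α • g i - xbar)) ^ 2) ≤
      ρ * Real.sqrt (∑ i, (frobNorm (x i - xbar)) ^ 2)) :
    Real.sqrt (∑ i, (frobNorm (x' i - xbar')) ^ 2) ≤
      ρ * Real.sqrt (∑ i, (frobNorm (x i - xbar)) ^ 2) +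
        β * Real.sqrt (∑ i, (frobNorm (v i)) ^ 2) := by
  have h1 : Real.sqrt (∑ i, (frobNorm (x' i - xbar')) ^ 2) ≤
      Real.sqrt (∑ i, (frobNorm ((x i - α • g i - xbar) + β • v i)) ^ 2) := by
    apply Real.sqrt_le_sqrt
    refine (hIAM' xbar hxbar).trans (Finset.sum_le_sum fun i _ => ?_)
    have h := hretr i xbar hxbar
    have e : x i - α • g i + β • v i - xbar = (x i - α • g i - xbar) + β • v i := by abel
    rw [e] at h
    exact pow_le_pow_left₀ (Real.sqrt_nonneg _) h 2
  have h2 : Real.sqrt (∑ i, (frobNorm ((x i - α • g i - xbar) + β • v i)) ^ 2) ≤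
      Real.sqrt (∑ i, (frobNorm (x i - α • g i - xbar)) ^ 2) +
        β * Real.sqrt (∑ i, (frobNorm (v i)) ^ 2) := by
    rw [famNorm_eq, famNorm_eq, famNorm_eq]
    have hs := fun w : EuclideanSpace ℝ (Fin n × Fin d × Fin r) => norm_smul β w
    simp only [Real.norm_eq_abs, abs_of_nonneg hβ] at hs
    rw [← hs]
    exact norm_add_le
      (WithLp.toLp 2 (fun p : Fin n × Fin d × Fin r =>
        (x p.1 - α • g p.1 - xbar) p.2.1 p.2.2) : EuclideanSpace ℝ (Fin n × Fin d × Fin r))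
      (β • (WithLp.toLp 2 (fun p : Fin n × Fin d × Fin r => v p.1 p.2.1 p.2.2) :
        EuclideanSpace ℝ (Fin n × Fin d × Fin r)))
  linarith
end
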